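/- Let P_{XY} be a probability distribution on a finite set X×Y and Φ_{Y^n} be the uniform mixture over type classes of Y^n. For any α > 0 and all n ∈ ℕ, one has I_α(X:Y)_{P_{XY}} ≤ (1/n) D_α(P_{XY}^{×n} ‖ P_X^{×n} × Φ_{Y^n}) ≤ I_α(X:Y)_{P_{XY}} + (|Y|/n)·log₂(n+1); in particular (1/n) D_α(P_{XY}^{×n} ‖ P_X^{×n} × Φ_{Y^n}) = I_α(X:Y)_{P_{XY}} + O(log n / n). -/

import Mathlib

open scoped ENNReal NNReal BigOperators Classical
open Filter

noncomputable section

namespace RST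

/-- Base-2 logarithm `ℝ≥0∞ → EReal`, with `log 0 = ⊥` and `log ⊤ = ⊤`. -/
def elog2 (s : ℝ≥0∞) : EReal :=
  if s = 0 then ⊥ else if s = ⊤ then ⊤ else ((Real.logb 2 s.toReal : ℝ) : EReal)

/-- Base-2 logarithm `EReal → EReal` (for nonnegative arguments). -/
def eLog2 (x : EReal) : EReal :=
  if x = ⊤ then ⊤ else if x ≤ 0 then ⊥ else ((Real.logb 2 x.toReal : ℝ) : EReal)

/-- Base-2 exponential `EReal → ℝ≥0∞`. -/
def epow2 (x : EReal) : ℝ≥0∞ :=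
  if x = ⊤ then ⊤ else if x = ⊥ then 0 else ENNReal.ofReal ((2 : ℝ) ^ x.toReal)

variable {X Y : Type*}

/-- A probability distribution on a finite alphabet, as an `ℝ≥0∞`-valued function. -/
def IsDist [Fintype X] (P : X → ℝ≥0∞) : Prop := ∑ x, P x = 1

/-- A discrete memoryless channel: every row is a probability distribution. -/
def IsChannel [Fintype X] [Fintype Y] (W : X → Y → ℝ≥0∞) : Prop := ∀ x, ∑ y, W x y = 1

/-- Order-`α` Rényi divergence (base 2), with the order `α ∈ [0,∞]` encoded as `ℝ≥0∞`.
The conventions `0/0 = 0` and `a/0 = ∞` (for `a > 0`, `α > 1`) are built into `ℝ≥0∞`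
arithmetic.  The second argument is allowed to be an arbitrary nonnegative vector. -/
def renyiD [Fintype X] (α : ℝ≥0∞) (P Q : X → ℝ≥0∞) : EReal :=
  if α = 0 then - elog2 (∑ x ∈ Finset.univ.filter fun x => P x ≠ 0, Q x)
  else if α = 1 then ∑ x, ((P x).toReal : EReal) * elog2 (P x / Q x)
  else if α = ⊤ then elog2 (⨆ x, P x / Q x)
  else (((α.toReal - 1)⁻¹ : ℝ) : EReal) *
    elog2 (∑ x, P x ^ α.toReal * Q x ^ (1 - α.toReal))

/-- The `X`-marginal of a joint distribution on `X × Y`. -/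
def margX [Fintype X] [Fintype Y] (P : X × Y → ℝ≥0∞) : X → ℝ≥0∞ := fun x => ∑ y, P (x, y)

/-- Order-`α` Rényi mutual information `I_α(X:Y)_P = min_{Q_Y} D_α(P‖P_X × Q_Y)`. -/
def renyiMI [Fintype X] [Fintype Y] (α : ℝ≥0∞) (P : X × Y → ℝ≥0∞) : EReal :=
  ⨅ Q : {Q : Y → ℝ≥0∞ // IsDist Q}, renyiD α P fun p => margX P p.1 * Q.1 p.2

/-- The joint input-output distribution `P_X · W`. -/
def joint [Fintype X] [Fintype Y] (PX : X → ℝ≥0∞) (W : X → Y → ℝ≥0∞) : X × Y → ℝ≥0∞ :=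
  fun p => PX p.1 * W p.1 p.2

/-- Order-`α` Rényi capacity `I_α(W) = max_{P_X} I_α(X:Y)_{P_X · W}`. -/
def renyiCap [Fintype X] [Fintype Y] (α : ℝ≥0∞) (W : X → Y → ℝ≥0∞) : EReal :=
  ⨆ P : {P : X → ℝ≥0∞ // IsDist P}, renyiMI α (joint P.1 W)

/-- `N` is a simulation of a channel `X → Y` with communication cost at most `c` bits:
shared randomness `K = Fin m` with distribution `PK`, a message set `{1,…,M}` with
`log₂ M ≤ c`, an encoder `E` and a decoder `D`. -/
def IsSimulation [Fintype X] [Fintype Y] (c : ℝ) (N : X → Y → ℝ≥0∞) : Prop :=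
  ∃ (m M : ℕ) (PK : Fin m → ℝ≥0∞) (E : X → Fin m → Fin M → ℝ≥0∞)
    (D : Fin M → Fin m → Y → ℝ≥0∞),
    0 < M ∧ Real.logb 2 M ≤ c ∧ (∑ k, PK k = 1) ∧
    (∀ x k, ∑ j, E x k j = 1) ∧ (∀ j k, ∑ y, D j k y = 1) ∧
    ∀ x y, N x y = ∑ k, ∑ j, PK k * E x k j * D j k y

/-- `D_α(W, N) := max_x D_α(W(·|x) ‖ N(·|x))`. -/
def chD [Fintype X] [Fintype Y] (α : ℝ≥0∞) (W N : X → Y → ℝ≥0∞) : EReal :=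
  ⨆ x, renyiD α (W x) (N x)

/-- `𝖣_α(W, c) := min_{N ∈ A(W,c)} D_α(W, N)`. -/
def simD [Fintype X] [Fintype Y] (α : ℝ≥0∞) (W : X → Y → ℝ≥0∞) (c : ℝ) : EReal :=
  ⨅ N : {N : X → Y → ℝ≥0∞ // IsSimulation c N}, chD α W N.1

/-- The `n`-fold memoryless extension `W^{×n}` of a channel `W`. -/
def prodCh [Fintype X] [Fintype Y] (n : ℕ) (W : X → Y → ℝ≥0∞) :
    (Fin n → X) → (Fin n → Y) → ℝ≥0∞ :=
  fun xs ys => ∏ i, W (xs i) (ys i)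

/-- A sequence of communication costs with rate at most `r`. -/
def RateOK (r : ℝ) (c : ℕ → ℝ) : Prop :=
  (∀ n, 0 ≤ c n) ∧ Filter.limsup (fun n : ℕ => ((c n / n : ℝ) : EReal)) Filter.atTop ≤ (r : EReal)

/-- Reliability function `E_rf^{(α)}(W, r)`. -/
def Erf [Fintype X] [Fintype Y] (α : ℝ≥0∞) (W : X → Y → ℝ≥0∞) (r : ℝ) : EReal :=
  ⨆ c : {c : ℕ → ℝ // RateOK r c},
    Filter.liminf
      (fun n : ℕ => (((-1 : ℝ) / n : ℝ) : EReal) * eLog2 (simD α (prodCh n W) (c.1 n)))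
      Filter.atTop

/-- Strong converse exponent `E_sc^{(α)}(W, r)`. -/
def Esc [Fintype X] [Fintype Y] (α : ℝ≥0∞) (W : X → Y → ℝ≥0∞) (r : ℝ) : EReal :=
  ⨅ c : {c : ℕ → ℝ // RateOK r c},
    Filter.limsup
      (fun n : ℕ => (((1 : ℝ) / n : ℝ) : EReal) * simD α (prodCh n W) (c.1 n))
      Filter.atTop

/-- The `α`-Rényi simulation rate `R_RST^{(α)}(W)`. -/
def Rrst [Fintype X] [Fintype Y] (α : ℝ≥0∞) (W : X → Y → ℝ≥0∞) : EReal :=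
  ⨅ c : {c : ℕ → ℝ // (∀ n, 0 ≤ c n) ∧
      Filter.limsup (fun n : ℕ => simD α (prodCh n W) (c n)) Filter.atTop = 0},
    Filter.limsup (fun n : ℕ => ((c.1 n / n : ℝ) : EReal)) Filter.atTop

/-- n-fold product of a joint distribution on `X × Y`, as a distribution on pairs of
sequences. -/
def prodJoint [Fintype X] [Fintype Y] (n : ℕ) (P : X × Y → ℝ≥0∞) :
    (Fin n → X) × (Fin n → Y) → ℝ≥0∞ :=
  fun p => ∏ i, P (p.1 i, p.2 i)

/-- n-fold product distribution. -/
def prodDist [Fintype X] (n : ℕ) (P : X → ℝ≥0∞) : (Fin n → X) → ℝ≥0∞ :=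
  fun xs => ∏ i, P (xs i)

/-- The type (empirical count vector) of a sequence. -/
def seqType [Fintype Y] [DecidableEq Y] {n : ℕ} (ys : Fin n → Y) : Y → ℕ :=
  fun y => (Finset.univ.filter fun i => ys i = y).card

/-- The cardinality of the type class of a sequence. -/
def typeClassCard [Fintype Y] [DecidableEq Y] {n : ℕ} (ys : Fin n → Y) : ℕ :=
  (Finset.univ.filter fun zs : Fin n → Y => seqType zs = seqType ys).card

/-- The number of types of sequences in `Y^n`. -/
def numTypes (Y : Type*) [Fintype Y] [DecidableEq Y] (n : ℕ) : ℕ :=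
  (Finset.univ.image fun ys : Fin n → Y => seqType ys).card

/-- `Φ_{Y^n}`: the uniform mixture over type classes of `Y^n`. -/
def PhiY (Y : Type*) [Fintype Y] [DecidableEq Y] (n : ℕ) : (Fin n → Y) → ℝ≥0∞ :=
  fun ys => ((numTypes Y n : ℝ≥0∞) * (typeClassCard ys : ℝ≥0∞))⁻¹

end RST

namespace RST

lemma elog2_eq (s : ℝ≥0∞) : elog2 s = (((Real.log 2)⁻¹ : ℝ) : EReal) * ENNReal.log s := by
  have h2 : 0 < (Real.log 2)⁻¹ := inv_pos.2 (Real.log_pos (by norm_num))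
  unfold elog2
  split_ifs with h h'
  · rw [h, ENNReal.log_zero, EReal.coe_mul_bot_of_pos h2]
  · rw [h', ENNReal.log_top, EReal.coe_mul_top_of_pos h2]
  · rw [ENNReal.log_pos_real h h', ← EReal.coe_mul, Real.logb]
    congr 1
    rw [div_eq_inv_mul]

lemma elog2_mono {s t : ℝ≥0∞} (h : s ≤ t) : elog2 s ≤ elog2 t := by
  have h2 : 0 < (Real.log 2)⁻¹ := inv_pos.2 (Real.log_pos (by norm_num))
  rw [elog2_eq, elog2_eq]
  exact mul_le_mul_of_nonneg_left (ENNReal.log_le_log h) (by exact_mod_cast h2.le)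

lemma elog2_rpow (s : ℝ≥0∞) (r : ℝ) : elog2 (s ^ r) = (r : EReal) * elog2 s := by
  rw [elog2_eq, elog2_eq, ENNReal.log_rpow, ← mul_assoc, ← mul_assoc, mul_comm (r : EReal)]

lemma elog2_mul (s t : ℝ≥0∞) : elog2 (s * t) = elog2 s + elog2 t := by
  rw [elog2_eq, elog2_eq, elog2_eq, ENNReal.log_mul_add, EReal.left_distrib_of_nonneg_of_ne_top]
  · exact_mod_cast (inv_pos.2 (Real.log_pos (by norm_num))).le
  · exact EReal.coe_ne_top _

lemma elog2_prod {ι : Type*} (s : Finset ι) (f : ι → ℝ≥0∞) :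
    elog2 (∏ i ∈ s, f i) = ∑ i ∈ s, elog2 (f i) := by
  induction s using Finset.induction with
  | empty => simp [elog2]
  | insert a s ha ih => rw [Finset.prod_insert ha, Finset.sum_insert ha, elog2_mul, ih]

/-- The exponentiated Renyi divergence. -/
def FD {ι : Type*} [Fintype ι] (α : ℝ) (P Q : ι → ℝ≥0∞) : ℝ≥0∞ :=
  if α = 1 then ∏ x, (P x / Q x) ^ (P x).toReal
  else (∑ x, P x ^ α * Q x ^ (1 - α)) ^ (α - 1)⁻¹

lemma renyiD_eq {ι : Type*} [Fintype ι] (α : ℝ) (hα : 0 < α) (P Q : ι → ℝ≥0∞) :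
    renyiD (ENNReal.ofReal α) P Q = elog2 (FD α P Q) := by
  unfold renyiD FD
  rw [if_neg (by simpa using hα), if_neg (c := ENNReal.ofReal α = ⊤) ENNReal.ofReal_ne_top,
    ENNReal.toReal_ofReal hα.le]
  by_cases h : α = 1
  · rw [if_pos (by simp [h]), if_pos h, elog2_prod]
    simp only [elog2_rpow]
  · rw [if_neg (by simpa using h), if_neg h, elog2_rpow]

lemma rpow_anti {x y : ℝ≥0∞} {z : ℝ} (hz : z ≤ 0) (h : x ≤ y) : y ^ z ≤ x ^ z := by
  rw [← neg_neg z, ENNReal.rpow_neg, ENNReal.rpow_neg x]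
  exact ENNReal.inv_le_inv.2 (ENNReal.rpow_le_rpow h (by linarith))

lemma dist_ne_top {ι : Type*} [Fintype ι] {P : ι → ℝ≥0∞} (hP : IsDist P) (x : ι) : P x ≠ ⊤ := by
  have : P x ≤ 1 := hP ▸ Finset.single_le_sum (fun _ _ => bot_le) (Finset.mem_univ x)
  exact ne_top_of_le_ne_top ENNReal.one_ne_top this

lemma rpow_sum_nonneg {ι : Type*} (s : Finset ι) (c : ℝ≥0∞) (f : ι → ℝ) (hf : ∀ i, 0 ≤ f i) :
    ∏ i ∈ s, c ^ f i = c ^ ∑ i ∈ s, f i := by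
  induction s using Finset.induction with
  | empty => simp
  | insert a s ha ih => rw [Finset.prod_insert ha, Finset.sum_insert ha, ih,
      ENNReal.rpow_add_of_nonneg _ _ (hf a) (Finset.sum_nonneg fun i _ => hf i)]

lemma dist_toReal {ι : Type*} [Fintype ι] {P : ι → ℝ≥0∞} (hP : IsDist P) :
    ∑ x, (P x).toReal = 1 := by
  rw [← ENNReal.toReal_sum (fun x _ => dist_ne_top hP x), hP, ENNReal.toReal_one]

lemma FD_mono {ι : Type*} [Fintype ι] {α : ℝ} {P Q R : ι → ℝ≥0∞} (hP : IsDist P)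
    {c : ℝ≥0∞} (hc : c ≠ 0) (hc' : c ≠ ⊤) (h : ∀ x, Q x ≤ c * R x) :
    FD α P R ≤ c * FD α P Q := by
  unfold FD
  have h' : ∀ x, c⁻¹ * Q x ≤ R x := fun x => by
    rw [mul_comm, ← div_eq_mul_inv]
    exact ENNReal.div_le_of_le_mul' (h x)
  split_ifs with h1
  · have : c = ∏ x, c ^ (P x).toReal := by
      rw [rpow_sum_nonneg _ _ _ (fun _ => ENNReal.toReal_nonneg), dist_toReal hP, ENNReal.rpow_one]
    conv_rhs => rw [this]
    rw [← Finset.prod_mul_distrib]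
    refine Finset.prod_le_prod' fun x _ => ?_
    rw [← ENNReal.mul_rpow_of_nonneg _ _ ENNReal.toReal_nonneg]
    refine ENNReal.rpow_le_rpow ?_ ENNReal.toReal_nonneg
    calc P x / R x ≤ P x / (c⁻¹ * Q x) := ENNReal.div_le_div_left (h' x) _
      _ = c * (P x / Q x) := by
        rw [div_eq_mul_inv, ENNReal.mul_inv (Or.inl (by simpa using hc'))
          (Or.inl (by simpa using hc)), inv_inv, div_eq_mul_inv]
        ring
  · have hmul : ∀ x, (c⁻¹ * Q x) ^ (1 - α) = c ^ (α - 1) * Q x ^ (1 - α) := fun x => by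
      rw [ENNReal.mul_rpow_eq_ite, if_neg (by simp [hc, hc']), ENNReal.inv_rpow,
        ← ENNReal.rpow_neg, neg_sub]
    have hS : ∑ x, P x ^ α * (c⁻¹ * Q x) ^ (1 - α)
        = c ^ (α - 1) * ∑ x, P x ^ α * Q x ^ (1 - α) := by
      rw [Finset.mul_sum]
      refine Finset.sum_congr rfl fun x _ => ?_
      rw [hmul]; ring
    have hr : (c ^ (α - 1) * ∑ x, P x ^ α * Q x ^ (1 - α)) ^ (α - 1)⁻¹
        = c * (∑ x, P x ^ α * Q x ^ (1 - α)) ^ (α - 1)⁻¹ := by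
      have h0 : c ^ (α - 1) ≠ 0 := by simp [ENNReal.rpow_eq_zero_iff, hc, hc']
      have ht : c ^ (α - 1) ≠ ⊤ := by simp [ENNReal.rpow_eq_top_iff, hc, hc']
      rw [ENNReal.mul_rpow_eq_ite, if_neg (by simp [h0, ht]), ← ENNReal.rpow_mul,
        mul_inv_cancel₀ (sub_ne_zero.2 h1), ENNReal.rpow_one]
    rw [← hr, ← hS]
    rcases lt_or_gt_of_ne h1 with h1 | h1
    · refine rpow_anti (inv_nonpos.2 (by linarith)) (Finset.sum_le_sum fun x _ => ?_)
      exact mul_le_mul_right (ENNReal.rpow_le_rpow (h' x) (by linarith)) _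
    · refine ENNReal.rpow_le_rpow (Finset.sum_le_sum fun x _ => ?_) (inv_nonneg.2 (by linarith))
      exact mul_le_mul_right (rpow_anti (by linarith) (h' x)) _

lemma FD_equiv {ι κ : Type*} [Fintype ι] [Fintype κ] (e : ι ≃ κ) (α : ℝ) (P Q : κ → ℝ≥0∞) :
    FD α (fun i => P (e i)) (fun i => Q (e i)) = FD α P Q := by
  unfold FD
  rw [Equiv.prod_comp e (fun x => (P x / Q x) ^ (P x).toReal),
    Equiv.sum_comp e (fun x => P x ^ α * Q x ^ (1 - α))]

lemma sum_prod_pow {ι : Type*} [Fintype ι] (n : ℕ) (f : ι → ℝ≥0∞) :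
    ∑ xs : Fin n → ι, ∏ i, f (xs i) = (∑ x, f x) ^ n := by
  have := Finset.prod_univ_sum (fun _ : Fin n => (Finset.univ : Finset ι)) (fun _ => f)
  rw [Fintype.piFinset_univ] at this
  rw [← this]; simp

lemma prodDist_isDist {ι : Type*} [Fintype ι] (n : ℕ) {P : ι → ℝ≥0∞} (hP : IsDist P) :
    IsDist (prodDist n P) := by
  unfold IsDist prodDist
  rw [sum_prod_pow, hP, one_pow]

lemma prodDist_marg {ι : Type*} [Fintype ι] (n : ℕ) {P : ι → ℝ≥0∞} (hP : IsDist P)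
    (i : Fin n) (x : ι) :
    ∑ xs ∈ Finset.univ.filter (fun xs : Fin n → ι => xs i = x), prodDist n P xs = P x := by
  have := Finset.prod_univ_sum
    (fun j : Fin n => if j = i then ({x} : Finset ι) else Finset.univ) (fun _ => P)
  have hs : Fintype.piFinset (fun j : Fin n => if j = i then ({x} : Finset ι) else Finset.univ)
      = Finset.univ.filter (fun xs : Fin n → ι => xs i = x) := by
    ext xs
    simp only [Fintype.mem_piFinset, Finset.mem_filter, Finset.mem_univ, true_and]
    constructor
    · intro h; simpa using h i
    · intro h j
      by_cases hj : j = i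
      · subst hj; simpa using h
      · simp [hj]
  unfold prodDist
  rw [← hs, ← this, Finset.prod_eq_single i]
  · simp
  · intro j _ hj; simp only [hj, if_false]; exact hP
  · simp

lemma FD_prod {ι : Type*} [Fintype ι] (n : ℕ) {α : ℝ} (hα : 0 < α) {P Q : ι → ℝ≥0∞}
    (hP : IsDist P) (hQ : ∀ x, Q x ≠ ⊤) :
    FD α (prodDist n P) (prodDist n Q) = FD α P Q ^ n := by
  unfold FD
  split_ifs with h1
  · have hdiv : ∀ xs : Fin n → ι, prodDist n P xs / prodDist n Q xs
        = ∏ i, (P (xs i) / Q (xs i)) := fun xs => by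
      simp only [div_eq_mul_inv, prodDist]
      rw [ENNReal.prod_inv_distrib (fun i _ j _ _ => Or.inr (hQ _)), Finset.prod_mul_distrib]
    simp only [hdiv]
    simp only [← ENNReal.prod_rpow_of_nonneg ENNReal.toReal_nonneg]
    rw [Finset.prod_comm]
    have key : ∀ i : Fin n, ∏ xs : Fin n → ι, (P (xs i) / Q (xs i)) ^ (prodDist n P xs).toReal
        = ∏ x, (P x / Q x) ^ (P x).toReal := fun i => by
      rw [← Finset.prod_fiberwise (Finset.univ : Finset (Fin n → ι)) (fun xs => xs i)]
      refine Finset.prod_congr rfl fun x _ => ?_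
      rw [Finset.prod_congr rfl (g := fun xs => (P x / Q x) ^ (prodDist n P xs).toReal)]
      · rw [rpow_sum_nonneg _ _ _ (fun _ => ENNReal.toReal_nonneg),
          ← ENNReal.toReal_sum (fun xs _ => dist_ne_top (prodDist_isDist n hP) xs),
          prodDist_marg n hP]
      · intro xs hxs
        rw [(Finset.mem_filter.1 hxs).2]
    simp [key]
  · have : ∀ xs : Fin n → ι, prodDist n P xs ^ α * prodDist n Q xs ^ (1 - α)
        = ∏ i, (P (xs i) ^ α * Q (xs i) ^ (1 - α)) := fun xs => by
      simp only [prodDist]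
      rw [← ENNReal.prod_rpow_of_nonneg hα.le,
        ← ENNReal.prod_rpow_of_ne_top (fun i _ => hQ _), Finset.prod_mul_distrib]
    simp only [this]
    rw [sum_prod_pow n (fun x => P x ^ α * Q x ^ (1 - α)), ← ENNReal.rpow_natCast,
      ← ENNReal.rpow_natCast, ← ENNReal.rpow_mul, ← ENNReal.rpow_mul, mul_comm]

lemma FD_prodXY {X Y : Type*} [Fintype X] [Fintype Y] (n : ℕ) {α : ℝ} (hα : 0 < α)
    {P : X × Y → ℝ≥0∞} (hP : IsDist P) {A : X → ℝ≥0∞} {Q : Y → ℝ≥0∞}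
    (hA : ∀ x, A x ≠ ⊤) (hQ : ∀ y, Q y ≠ ⊤) :
    FD α (prodJoint n P) (fun p => prodDist n A p.1 * prodDist n Q p.2)
      = FD α P (fun p => A p.1 * Q p.2) ^ n := by
  rw [← FD_prod n hα hP (fun p => ENNReal.mul_ne_top (hA _) (hQ _)),
    ← FD_equiv (Equiv.arrowProdEquivProdArrow (Fin n) (fun _ => X) (fun _ => Y))]
  congr 1
  funext xs
  simp [prodDist, Finset.prod_mul_distrib, Equiv.arrowProdEquivProdArrow]

lemma prodJoint_isDist {X Y : Type*} [Fintype X] [Fintype Y] (n : ℕ)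
    {P : X × Y → ℝ≥0∞} (hP : IsDist P) : IsDist (prodJoint n P) := by
  have := prodDist_isDist n hP
  unfold IsDist at *
  rw [← this, ← Equiv.sum_comp (Equiv.arrowProdEquivProdArrow (Fin n) (fun _ => X) (fun _ => Y))]
  rfl

lemma sum_prod_col {X Y : Type*} [Fintype X] (n : ℕ) (f : X → Y → ℝ≥0∞) (ys : Fin n → Y) :
    ∑ xs : Fin n → X, ∏ i, f (xs i) (ys i) = ∏ i, ∑ x, f x (ys i) := by
  have := Finset.prod_univ_sum (fun _ : Fin n => (Finset.univ : Finset X))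
    (fun i x => f x (ys i))
  rw [Fintype.piFinset_univ] at this
  rw [← this]

/-- Sibson kernel. -/
def gS {X Y : Type*} [Fintype X] (α : ℝ) (P : X × Y → ℝ≥0∞) (A : X → ℝ≥0∞) (y : Y) : ℝ≥0∞ :=
  (∑ x, P (x, y) ^ α * A x ^ (1 - α)) ^ α⁻¹

lemma gS_rpow {X Y : Type*} [Fintype X] {α : ℝ} (hα : 0 < α) (P : X × Y → ℝ≥0∞)
    (A : X → ℝ≥0∞) (y : Y) : gS α P A y ^ α = ∑ x, P (x, y) ^ α * A x ^ (1 - α) := by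
  rw [gS, ← ENNReal.rpow_mul, inv_mul_cancel₀ hα.ne', ENNReal.rpow_one]

lemma FD_eq_gS {X Y : Type*} [Fintype X] [Fintype Y] {α : ℝ} (hα : 0 < α) (h1 : α ≠ 1)
    (P : X × Y → ℝ≥0∞) {A : X → ℝ≥0∞} {R : Y → ℝ≥0∞} (hA : ∀ x, A x ≠ ⊤) (hR : ∀ y, R y ≠ ⊤) :
    FD α P (fun p => A p.1 * R p.2)
      = (∑ y, gS α P A y ^ α * R y ^ (1 - α)) ^ (α - 1)⁻¹ := by
  rw [FD, if_neg h1, Fintype.sum_prod_type_right]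
  congr 1
  refine Finset.sum_congr rfl fun y _ => ?_
  rw [gS_rpow hα, Finset.sum_mul]
  refine Finset.sum_congr rfl fun x _ => ?_
  rw [ENNReal.mul_rpow_of_ne_top (hA x) (hR y), mul_assoc]

lemma gS_prod {X Y : Type*} [Fintype X] [Fintype Y] (n : ℕ) {α : ℝ} (hα : 0 < α)
    (P : X × Y → ℝ≥0∞) {A : X → ℝ≥0∞} (hA : ∀ x, A x ≠ ⊤) (ys : Fin n → Y) :
    gS α (prodJoint n P) (prodDist n A) ys = ∏ i, gS α P A (ys i) := by
  unfold gS
  rw [ENNReal.prod_rpow_of_nonneg (inv_nonneg.2 hα.le),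
    ← sum_prod_col n (fun x y => P (x, y) ^ α * A x ^ (1 - α))]
  congr 1
  refine Finset.sum_congr rfl fun xs _ => ?_
  simp only [prodJoint, prodDist]
  rw [← ENNReal.prod_rpow_of_nonneg hα.le,
    ← ENNReal.prod_rpow_of_ne_top (fun i _ => hA _), Finset.prod_mul_distrib]

lemma sibson_le {Y : Type*} [Fintype Y] {α : ℝ} (hα : 0 < α) (h1 : α ≠ 1)
    (g : Y → ℝ≥0∞) {R : Y → ℝ≥0∞} (hR : IsDist R) (hR0 : ∀ y, R y ≠ 0) :
    (∑ y, g y) ^ (α / (α - 1)) ≤ (∑ y, g y ^ α * R y ^ (1 - α)) ^ (α - 1)⁻¹ := by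
  have hRt := dist_ne_top hR
  rw [div_eq_mul_inv, ENNReal.rpow_mul]
  rcases lt_or_gt_of_ne h1 with h1 | h1
  · refine rpow_anti (inv_nonpos.2 (by linarith)) ?_
    have hpq : (α⁻¹).HolderConjugate (1 - α)⁻¹ := by
      rw [Real.holderConjugate_iff]
      refine ⟨(one_lt_inv₀ hα).2 h1, by simp⟩
    have := ENNReal.inner_le_Lp_mul_Lq Finset.univ (fun y => g y ^ α)
      (fun y => R y ^ (1 - α)) hpq
    have e1 : ∀ y, (g y ^ α) ^ α⁻¹ = g y := fun y => by
      rw [← ENNReal.rpow_mul, mul_inv_cancel₀ hα.ne', ENNReal.rpow_one]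
    have e2 : ∀ y, (R y ^ (1 - α)) ^ (1 - α)⁻¹ = R y := fun y => by
      rw [← ENNReal.rpow_mul, mul_inv_cancel₀ (by linarith), ENNReal.rpow_one]
    simp only [e1, e2] at this
    rw [show ∑ y, R y = 1 from hR] at this
    simpa using this
  · refine ENNReal.rpow_le_rpow ?_ (inv_nonneg.2 (by linarith))
    have := ENNReal.inner_le_weight_mul_Lp_of_nonneg Finset.univ h1.le R (fun y => g y / R y)
    rw [show ∑ y, R y = 1 from hR, ENNReal.one_rpow, one_mul] at this
    have e1 : ∀ y, R y * (g y / R y) = g y := fun y => ENNReal.mul_div_cancel (hR0 y) (hRt y)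
    have e2 : ∀ y, R y * (g y / R y) ^ α = g y ^ α * R y ^ (1 - α) := fun y => by
      rw [ENNReal.div_rpow_of_nonneg _ _ hα.le, ENNReal.rpow_sub _ _ (hR0 y) (hRt y),
        ENNReal.rpow_one, div_eq_mul_inv, div_eq_mul_inv]
      ring
    simp only [e1, e2] at this
    calc (∑ y, g y) ^ α ≤ ((∑ y, g y ^ α * R y ^ (1 - α)) ^ α⁻¹) ^ α :=
          ENNReal.rpow_le_rpow this hα.le
      _ = _ := by rw [← ENNReal.rpow_mul, inv_mul_cancel₀ hα.ne', ENNReal.rpow_one]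

lemma sibson_eq {Y : Type*} [Fintype Y] {α : ℝ} (hα : 0 < α)
    (g : Y → ℝ≥0∞) (h0 : ∑ y, g y ≠ 0) (ht : ∑ y, g y ≠ ⊤) :
    (∑ y, g y ^ α * (g y / ∑ z, g z) ^ (1 - α)) ^ (α - 1)⁻¹ = (∑ y, g y) ^ (α / (α - 1)) := by
  set G := ∑ y, g y with hG
  have hgt : ∀ y, g y ≠ ⊤ := fun y =>
    ne_top_of_le_ne_top ht (Finset.single_le_sum (fun _ _ => bot_le) (Finset.mem_univ y))
  have : ∀ y, g y ^ α * (g y / G) ^ (1 - α) = G ^ (α - 1) * g y := fun y => by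
    have h2 : g y ^ α * g y ^ (1 - α) = g y := by
      by_cases hy : g y = 0
      · rw [hy, ENNReal.zero_rpow_of_pos hα, zero_mul]
      · rw [← ENNReal.rpow_add _ _ hy (hgt y)]; simp
    rw [div_eq_mul_inv, ENNReal.mul_rpow_of_ne_top (hgt y) (by simpa using h0), ENNReal.inv_rpow,
      ← ENNReal.rpow_neg, neg_sub, ← mul_assoc, h2, mul_comm]
  simp only [this]
  rw [← Finset.mul_sum, ← hG]
  have : G ^ (α - 1) * G = G ^ α := by
    conv_lhs => rw [← ENNReal.rpow_one G, ← ENNReal.rpow_mul, one_mul]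
    rw [← ENNReal.rpow_add _ _ h0 ht]; simp
  rw [this, ← ENNReal.rpow_mul, div_eq_mul_inv]

lemma gibbs {Y : Type*} [Fintype Y] {p R : Y → ℝ≥0∞} (hp : IsDist p) (hR : IsDist R)
    (hR0 : ∀ y, R y ≠ 0) : 1 ≤ ∏ y, (p y / R y) ^ (p y).toReal := by
  have hRt := dist_ne_top hR
  have hpt := dist_ne_top hp
  have h := Real.geom_mean_le_arith_mean_weighted Finset.univ (fun y => (p y).toReal)
    (fun y => (R y / p y).toReal) (fun _ _ => ENNReal.toReal_nonneg) (dist_toReal hp)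
    (fun _ _ => ENNReal.toReal_nonneg)
  have h' : ∑ y, (p y).toReal * (R y / p y).toReal ≤ 1 := by
    rw [← dist_toReal hR]
    refine Finset.sum_le_sum fun y _ => ?_
    by_cases hy : p y = 0
    · simp [hy]
    · rw [← ENNReal.toReal_mul, ENNReal.mul_div_cancel hy (hpt y)]
  have e : ∀ y, (p y / R y) ^ (p y).toReal
      = (ENNReal.ofReal ((R y / p y).toReal ^ (p y).toReal))⁻¹ := fun y => by
    by_cases hy : p y = 0
    · simp [hy]
    · rw [← ENNReal.ofReal_rpow_of_nonneg ENNReal.toReal_nonneg ENNReal.toReal_nonneg,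
        ENNReal.ofReal_toReal (ENNReal.div_ne_top (hRt y) hy), ← ENNReal.inv_rpow,
        ENNReal.inv_div (Or.inl (hpt y)) (Or.inl hy)]
  simp only [e]
  rw [← ENNReal.prod_inv_distrib (fun i _ j _ _ => Or.inr ENNReal.ofReal_ne_top),
    ← ENNReal.ofReal_prod_of_nonneg (fun _ _ => Real.rpow_nonneg ENNReal.toReal_nonneg _),
    ENNReal.one_le_inv, ENNReal.ofReal_le_one]
  exact h.trans h'

lemma FD_one_le {X Y : Type*} [Fintype X] [Fintype Y] {P : X × Y → ℝ≥0∞} (hP : IsDist P)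
    (A : X → ℝ≥0∞) {p R : Y → ℝ≥0∞} (hpP : ∀ y, p y = ∑ x, P (x, y)) (hR : IsDist R)
    (hR0 : ∀ y, R y ≠ 0) :
    FD 1 P (fun q => A q.1 * p q.2) ≤ FD 1 P (fun q => A q.1 * R q.2) := by
  have hRt := dist_ne_top hR
  have hp : IsDist p := by
    unfold IsDist at *
    rw [← hP, Fintype.sum_prod_type_right]
    simp [hpP]
  have hpt := dist_ne_top hp
  have hg := gibbs hp hR hR0
  simp only [FD, if_true]
  have e : ∀ q : X × Y, (P q / (A q.1 * R q.2)) ^ (P q).toReal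
      = (P q / (A q.1 * p q.2)) ^ (P q).toReal * (p q.2 / R q.2) ^ (P q).toReal := fun q => by
    by_cases hq : P q = 0
    · simp [hq]
    have hpq : p q.2 ≠ 0 := by
      intro h
      rw [hpP] at h
      exact hq (Finset.sum_eq_zero_iff.1 h q.1 (Finset.mem_univ _))
    rw [← ENNReal.mul_rpow_of_nonneg _ _ ENNReal.toReal_nonneg]
    congr 1
    rw [div_eq_mul_inv, div_eq_mul_inv, div_eq_mul_inv,
      ENNReal.mul_inv (Or.inr (hRt _)) (Or.inr (hR0 _)),
      ENNReal.mul_inv (Or.inr (hpt _)) (Or.inr hpq)]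
    calc P q * ((A q.1)⁻¹ * (R q.2)⁻¹)
        = P q * ((A q.1)⁻¹ * (R q.2)⁻¹) * (p q.2 * (p q.2)⁻¹) := by
          rw [ENNReal.mul_inv_cancel hpq (hpt _), mul_one]
      _ = _ := by ring
  have e2 : ∏ q : X × Y, (p q.2 / R q.2) ^ (P q).toReal
      = ∏ y, (p y / R y) ^ (p y).toReal := by
    rw [Fintype.prod_prod_type_right]
    refine Finset.prod_congr rfl fun y _ => ?_
    have hpy : (p y).toReal = ∑ x, (P (x, y)).toReal := by
      rw [hpP, ENNReal.toReal_sum (fun x _ => dist_ne_top hP _)]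
    rw [hpy]
    exact rpow_sum_nonneg Finset.univ (p y / R y) (fun x => (P (x, y)).toReal)
      (fun _ => ENNReal.toReal_nonneg)
  simp only [e]
  rw [Finset.prod_mul_distrib, e2]
  exact le_mul_of_one_le_right bot_le hg

lemma lower {X Y : Type*} [Fintype X] [Fintype Y] {P : X × Y → ℝ≥0∞} (hP : IsDist P)
    {α : ℝ} (hα : 0 < α) (n : ℕ) {R : (Fin n → Y) → ℝ≥0∞} (hR : IsDist R)
    (hR0 : ∀ y, R y ≠ 0) :
    ∃ Q : Y → ℝ≥0∞, IsDist Q ∧ FD α P (fun p => margX P p.1 * Q p.2) ^ n ≤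
      FD α (prodJoint n P) (fun p => prodDist n (margX P) p.1 * R p.2) := by
  have hA : IsDist (margX P) := by
    unfold IsDist margX at *
    rw [← hP, Fintype.sum_prod_type]
  have hAt := dist_ne_top hA
  have hAnt := dist_ne_top (prodDist_isDist n hA)
  by_cases h1 : α = 1
  · subst h1
    have hQ : IsDist (fun y => ∑ x, P (x, y)) := by
      unfold IsDist at *
      rw [← hP, Fintype.sum_prod_type_right]
    refine ⟨fun y => ∑ x, P (x, y), hQ, ?_⟩
    rw [← FD_prodXY n hα hP hAt (dist_ne_top hQ)]
    refine FD_one_le (prodJoint_isDist n hP) _ (fun ys => ?_) hR hR0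
    exact (sum_prod_col n (fun x y => P (x, y)) ys).symm
  · have hterm : ∀ x y, P (x, y) ^ α * margX P x ^ (1 - α) ≠ ⊤ := fun x y => by
      by_cases hx : margX P x = 0
      · have : P (x, y) = 0 := Finset.sum_eq_zero_iff.1 hx y (Finset.mem_univ _)
        rw [this, ENNReal.zero_rpow_of_pos hα, zero_mul]; simp
      · exact ENNReal.mul_ne_top (ENNReal.rpow_ne_top_of_nonneg hα.le (dist_ne_top hP _))
          (by simp [ENNReal.rpow_eq_top_iff, hx, hAt x])
    have hGt : ∑ y, gS α P (margX P) y ≠ ⊤ :=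
      ENNReal.sum_ne_top.2 fun y _ => ENNReal.rpow_ne_top_of_nonneg (inv_nonneg.2 hα.le)
        (ENNReal.sum_ne_top.2 fun x _ => hterm x y)
    have hG0 : ∑ y, gS α P (margX P) y ≠ 0 := by
      intro h
      have hz : ∀ q, P q = 0 := by
        rintro ⟨x, y⟩
        have h2 := Finset.sum_eq_zero_iff.1 h y (Finset.mem_univ _)
        have h3 := gS_rpow hα P (margX P) y
        rw [h2, ENNReal.zero_rpow_of_pos hα] at h3
        have h4 := Finset.sum_eq_zero_iff.1 h3.symm x (Finset.mem_univ _)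
        rcases mul_eq_zero.1 h4 with h5 | h5
        · rcases ENNReal.rpow_eq_zero_iff.1 h5 with h6 | h6
          · exact h6.1
          · exact absurd h6.1 (dist_ne_top hP _)
        · rcases ENNReal.rpow_eq_zero_iff.1 h5 with h6 | h6
          · exact Finset.sum_eq_zero_iff.1 h6.1 y (Finset.mem_univ _)
          · exact absurd h6.1 (hAt _)
      unfold IsDist at hP
      simp [hz] at hP
    have hQ : IsDist (fun y => gS α P (margX P) y / ∑ z, gS α P (margX P) z) := by
      unfold IsDist
      simp only [div_eq_mul_inv]
      rw [← Finset.sum_mul, ENNReal.mul_inv_cancel hG0 hGt]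
    refine ⟨_, hQ, ?_⟩
    rw [FD_eq_gS hα h1 P hAt (dist_ne_top hQ), FD_eq_gS hα h1 _ hAnt (dist_ne_top hR),
      sibson_eq hα _ hG0 hGt]
    refine le_trans (le_of_eq ?_) (sibson_le hα h1 _ hR hR0)
    simp only [gS_prod n hα P hAt]
    rw [sum_prod_pow, ← ENNReal.rpow_natCast, ← ENNReal.rpow_natCast, ← ENNReal.rpow_mul,
      ← ENNReal.rpow_mul, mul_comm]

lemma typeClassCard_pos {Y : Type*} [Fintype Y] [DecidableEq Y] {n : ℕ} (ys : Fin n → Y) :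
    0 < typeClassCard ys :=
  Finset.card_pos.2 ⟨ys, by simp⟩

lemma numTypes_pos {Y : Type*} [Fintype Y] [DecidableEq Y] {n : ℕ} (ys : Fin n → Y) :
    0 < numTypes Y n :=
  Finset.card_pos.2 ⟨seqType ys, Finset.mem_image_of_mem _ (Finset.mem_univ _)⟩

lemma numTypes_le (Y : Type*) [Fintype Y] [DecidableEq Y] (n : ℕ) :
    numTypes Y n ≤ (n + 1) ^ Fintype.card Y := by
  have : (Finset.univ.image fun ys : Fin n → Y => seqType ys)
      ⊆ Fintype.piFinset (fun _ : Y => Finset.range (n + 1)) := by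
    intro t ht
    obtain ⟨ys, -, rfl⟩ := Finset.mem_image.1 ht
    rw [Fintype.mem_piFinset]
    intro y
    rw [Finset.mem_range, Nat.lt_succ_iff]
    exact (Finset.card_le_univ _).trans (by simp)
  refine (Finset.card_le_card this).trans ?_
  simp

lemma prodDist_type {Y : Type*} [Fintype Y] [DecidableEq Y] {n : ℕ} (Q : Y → ℝ≥0∞)
    (ys : Fin n → Y) : prodDist n Q ys = ∏ y, Q y ^ seqType ys y := by
  unfold prodDist seqType
  rw [← Finset.prod_fiberwise (Finset.univ : Finset (Fin n)) ys]
  refine Finset.prod_congr rfl fun y _ => ?_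
  rw [Finset.prod_congr rfl (g := fun _ => Q y)]
  · rw [Finset.prod_const]
  · intro i hi; rw [(Finset.mem_filter.1 hi).2]

lemma prodDist_le_Phi {Y : Type*} [Fintype Y] [DecidableEq Y] {n : ℕ} {Q : Y → ℝ≥0∞}
    (hQ : IsDist Q) (ys : Fin n → Y) :
    prodDist n Q ys ≤ (numTypes Y n : ℝ≥0∞) * PhiY Y n ys := by
  have hc : (typeClassCard ys : ℝ≥0∞) ≠ 0 := by exact_mod_cast (typeClassCard_pos ys).ne'
  have hN : (numTypes Y n : ℝ≥0∞) ≠ 0 := by exact_mod_cast (numTypes_pos ys).ne'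
  have h1 : (typeClassCard ys : ℝ≥0∞) * prodDist n Q ys ≤ 1 := by
    calc (typeClassCard ys : ℝ≥0∞) * prodDist n Q ys
        = ∑ zs ∈ Finset.univ.filter (fun zs : Fin n → Y => seqType zs = seqType ys),
            prodDist n Q zs := by
          rw [Finset.sum_congr rfl (g := fun _ => prodDist n Q ys)]
          · rw [Finset.sum_const, nsmul_eq_mul]; rfl
          · intro zs hz
            rw [prodDist_type, prodDist_type, (Finset.mem_filter.1 hz).2]
      _ ≤ ∑ zs, prodDist n Q zs := Finset.sum_le_sum_of_subset (Finset.filter_subset _ _)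
      _ = 1 := prodDist_isDist n hQ
  unfold PhiY
  rw [ENNReal.mul_inv (Or.inl hN) (Or.inr hc), ← mul_assoc,
    ENNReal.mul_inv_cancel hN (ENNReal.natCast_ne_top _), one_mul]
  rw [← one_div, ENNReal.le_div_iff_mul_le (Or.inl hc) (Or.inl (ENNReal.natCast_ne_top _)),
    mul_comm]
  exact h1

lemma Phi_ne_zero {Y : Type*} [Fintype Y] [DecidableEq Y] {n : ℕ} (ys : Fin n → Y) :
    PhiY Y n ys ≠ 0 :=
  ENNReal.inv_ne_zero.2 (ENNReal.mul_ne_top (ENNReal.natCast_ne_top _) (ENNReal.natCast_ne_top _))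

lemma Phi_isDist {Y : Type*} [Fintype Y] [DecidableEq Y] [Nonempty Y] (n : ℕ) :
    IsDist (PhiY Y n) := by
  obtain ⟨y0⟩ := ‹Nonempty Y›
  have hN : (numTypes Y n : ℝ≥0∞) ≠ 0 := by
    exact_mod_cast (numTypes_pos (fun _ : Fin n => y0)).ne'
  unfold IsDist
  rw [← Finset.sum_fiberwise_of_maps_to (s := Finset.univ)
    (t := Finset.univ.image fun ys : Fin n → Y => seqType ys) (g := seqType)
    (fun x hx => Finset.mem_image_of_mem _ hx)]
  rw [Finset.sum_congr rfl (g := fun _ => (numTypes Y n : ℝ≥0∞)⁻¹)]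
  · rw [Finset.sum_const, nsmul_eq_mul]
    exact ENNReal.mul_inv_cancel hN (ENNReal.natCast_ne_top _)
  · intro S hS
    obtain ⟨ys, -, rfl⟩ := Finset.mem_image.1 hS
    have hc : (typeClassCard ys : ℝ≥0∞) ≠ 0 := by exact_mod_cast (typeClassCard_pos ys).ne'
    rw [Finset.sum_congr rfl (g := fun _ => PhiY Y n ys)]
    · rw [Finset.sum_const, nsmul_eq_mul]
      change (typeClassCard ys : ℝ≥0∞) * _ = _
      unfold PhiY
      rw [ENNReal.mul_inv (Or.inl hN) (Or.inr hc), mul_comm, mul_assoc,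
        ENNReal.inv_mul_cancel hc (ENNReal.natCast_ne_top _), mul_one]
    · intro zs hz
      unfold PhiY typeClassCard
      rw [(Finset.mem_filter.1 hz).2]

/-- **Lemma 20.**  For a joint distribution `P_{XY}`, the uniform type mixture
`Φ_{Y^n}`, any `α > 0` and all `n ≥ 1`:
`I_α(X:Y) ≤ (1/n) D_α(P^{×n} ‖ P_X^{×n} × Φ_{Y^n}) ≤ I_α(X:Y) + (|Y|/n) log₂(n+1)`;
in particular `(1/n) D_α(P^{×n} ‖ P_X^{×n} × Φ_{Y^n}) = I_α(X:Y) + O(log n / n)`. -/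
theorem renyiMI_prod_phi_bounds
    {X Y : Type*} [Fintype X] [Fintype Y] [DecidableEq Y]
    (P : X × Y → ℝ≥0∞) (hP : IsDist P) (α : ℝ) (hα : 0 < α) (n : ℕ) (hn : 0 < n) :
    renyiMI (ENNReal.ofReal α) P ≤
        (((1 : ℝ) / n : ℝ) : EReal) *
          renyiD (ENNReal.ofReal α) (prodJoint n P)
            (fun p => prodDist n (margX P) p.1 * PhiY Y n p.2) ∧
      (((1 : ℝ) / n : ℝ) : EReal) *
          renyiD (ENNReal.ofReal α) (prodJoint n P)
            (fun p => prodDist n (margX P) p.1 * PhiY Y n p.2) ≤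
        renyiMI (ENNReal.ofReal α) P +
          (((Fintype.card Y : ℝ) / n * Real.logb 2 ((n : ℝ) + 1) : ℝ) : EReal) := by
  have hne : Nonempty Y := by
    by_contra h
    rw [not_nonempty_iff] at h
    unfold IsDist at hP
    simp at hP
  have hA : IsDist (margX P) := by
    unfold IsDist margX at *
    rw [← hP, Fintype.sum_prod_type]
  have hAt := dist_ne_top hA
  have hnR : (n : ℝ) ≠ 0 := by exact_mod_cast hn.ne'
  rw [renyiD_eq α hα, ← elog2_rpow]
  have hroot : ∀ s : ℝ≥0∞, (s ^ n) ^ ((1 : ℝ) / n) = s := fun s => by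
    rw [← ENNReal.rpow_natCast, ← ENNReal.rpow_mul, mul_one_div_cancel hnR, ENNReal.rpow_one]
  have hn0 : (0 : ℝ) ≤ 1 / n := by positivity
  constructor
  · obtain ⟨Q, hQ, h⟩ := lower hP hα n (Phi_isDist (Y := Y) n) Phi_ne_zero
    refine (iInf_le _ (⟨Q, hQ⟩ : {Q : Y → ℝ≥0∞ // IsDist Q})).trans ?_
    rw [renyiD_eq α hα]
    apply elog2_mono
    rw [← hroot (FD _ _ _)]
    exact ENNReal.rpow_le_rpow h hn0
  · rw [← EReal.sub_le_iff_le_add (Or.inl (EReal.coe_ne_bot _)) (Or.inl (EReal.coe_ne_top _))]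
    refine le_iInf fun ⟨Q, hQ⟩ => ?_
    rw [EReal.sub_le_iff_le_add (Or.inl (EReal.coe_ne_bot _)) (Or.inl (EReal.coe_ne_top _)),
      renyiD_eq α hα]
    obtain ⟨y0⟩ := hne
    have hN := numTypes_pos (fun _ : Fin n => y0)
    have hN' : (numTypes Y n : ℝ≥0∞) ≠ 0 := by exact_mod_cast hN.ne'
    have h := FD_mono (α := α) (prodJoint_isDist n hP) hN' (ENNReal.natCast_ne_top _)
      (Q := fun p => prodDist n (margX P) p.1 * prodDist n Q p.2)
      (R := fun p => prodDist n (margX P) p.1 * PhiY Y n p.2) (fun p => by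
        rw [mul_left_comm]
        exact mul_le_mul_right (prodDist_le_Phi hQ p.2) _)
    rw [FD_prodXY n hα hP hAt (dist_ne_top hQ)] at h
    have h2 := ENNReal.rpow_le_rpow h hn0
    rw [ENNReal.mul_rpow_of_nonneg _ _ hn0, hroot, mul_comm] at h2
    refine (elog2_mono h2).trans ?_
    rw [elog2_mul, elog2_rpow]
    refine add_le_add le_rfl ?_
    rw [elog2, if_neg hN', if_neg (ENNReal.natCast_ne_top _), ← EReal.coe_mul, EReal.coe_le_coe_iff,
      ENNReal.toReal_natCast]
    have hle : Real.logb 2 (numTypes Y n) ≤ Fintype.card Y * Real.logb 2 ((n : ℝ) + 1) := by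
      rw [← Real.logb_pow]
      refine Real.logb_le_logb_of_le (by norm_num) (by exact_mod_cast hN) ?_
      exact_mod_cast numTypes_le Y n
    calc (1 : ℝ) / n * Real.logb 2 (numTypes Y n)
        ≤ 1 / n * (Fintype.card Y * Real.logb 2 ((n : ℝ) + 1)) :=
          mul_le_mul_of_nonneg_left hle hn0
      _ = _ := by ring

end RST
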